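/- Let a = {a_j}_{j≥1} and b = {b_j}_{j≥1} be sequences of positive real numbers with a_1 ≤ a_2 ≤ ⋯ and inf_{j≥1} b_j > 0, and for d ∈ ℕ, ε ∈ (0,1) let n(ε, I_d) = #{k ∈ ℤ^d : Σ_{j=1}^d a_j |k_j|^{2b_j} < ε^{-2} - 1}. Then for all s, t > 0 with max(s/2, t) > 1, (s,t)-weak tractability holds, i.e., lim_{ε^{-1}+d→∞} (ln n(ε, I_d))/((ε^{-1})^s + d^t) = 0. -/

import Mathlib

/-!
Write `X = ε⁻¹` and let `A = a 0 > 0`, `β = inf b_j > 0`, `y = X² / A`. Since the `k_j` are integers,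
every counted `k` satisfies `∑ |k_j|^{2 b_j} < y`, so it has at most `y` nonzero coordinates and each
coordinate is at most `N ≍ X^{1/β}` in absolute value. An exponential-weight (Chernoff) count over
the box `[-N, N]^d` gives `n ≤ e^{l y} (1 + 2 N e^{-l})^d` for every `l ≥ 0`
(`ncard_le_exp_mul_pow`). Two choices of `l` suffice:

* `l = 0` gives `ln n ≤ d ln (2 N + 1) ≲ d (1 + ln X)`, used when `t > 1`;
* `l = ln (2 N d)` gives `ln n ≤ y ln (2 N d) + 1 ≲ X² (1 + ln X + ln d)`, used when `s > 2`.

In both cases a Young-type inequality (`mul_one_add_log_le`: `u (1 + ln v)` is at most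
`η (u^p + v^q) + K` when `p > 1`) shows `ln n ≤ η (X^s + d^t) + K` for arbitrarily small `η`, and the
constant `K` is absorbed because `X^s + d^t → ∞`.
-/

open Filter

/-- Chernoff count: if every point of `S ⊆ ℤ^d` lies in the box `[-N, N]^d` and has at most `y`
nonzero coordinates, weigh each point of the box by `exp (l * (y - #nonzero))`, which is at least `1`
on `S`; the total weight factors over the coordinates. -/
lemma ncard_le_exp_mul_pow (d N : ℕ) (S : Set (Fin d → ℤ)) (y l : ℝ) (hl : 0 ≤ l)
    (hN : ∀ k ∈ S, ∀ j, |k j| ≤ (N : ℤ))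
    (hy : ∀ k ∈ S, (∑ j, if k j = 0 then (0 : ℝ) else 1) ≤ y) :
    (S.ncard : ℝ) ≤ Real.exp (l * y) * (1 + 2 * N * Real.exp (-l)) ^ d := by
  classical
  set B : Finset (Fin d → ℤ) := Fintype.piFinset fun _ => Finset.Icc (-(N : ℤ)) N with hB
  have hS : S = ↑(B.filter (· ∈ S)) := by
    ext k
    simp only [Finset.coe_filter, Set.mem_ofPred_eq, hB, Fintype.mem_piFinset, Finset.mem_Icc]
    exact ⟨fun h => ⟨fun j => abs_le.1 (hN k h j), h⟩, fun h => h.2⟩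
  have hone : ∑ i ∈ Finset.Icc (-(N : ℤ)) N, Real.exp (-l * if i = 0 then (0 : ℝ) else 1)
      = 1 + 2 * N * Real.exp (-l) := by
    have h0 : (0 : ℤ) ∈ Finset.Icc (-(N : ℤ)) N := by simp
    rw [← Finset.add_sum_erase _ _ h0]
    have : ∀ i ∈ (Finset.Icc (-(N : ℤ)) N).erase 0,
        Real.exp (-l * if i = 0 then (0 : ℝ) else 1) = Real.exp (-l) := by
      intro i hi
      simp [(Finset.mem_erase.1 hi).1]
    rw [Finset.sum_congr rfl this, Finset.sum_const, Finset.card_erase_of_mem h0, Int.card_Icc]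
    have hc : ((N : ℤ) + 1 - -(N : ℤ)).toNat - 1 = 2 * N := by omega
    rw [hc]
    simp
  calc (S.ncard : ℝ) = ∑ k ∈ B.filter (· ∈ S), (1 : ℝ) := by
        rw [Finset.sum_const, nsmul_eq_mul, mul_one, ← Set.ncard_coe_finset, ← hS]
    _ ≤ ∑ k ∈ B.filter (· ∈ S),
          Real.exp (l * y) * ∏ j, Real.exp (-l * if k j = 0 then (0 : ℝ) else 1) := by
        refine Finset.sum_le_sum fun k hk => ?_
        rw [← Real.exp_sum, ← Real.exp_add, ← Finset.mul_sum]
        refine Real.one_le_exp ?_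
        nlinarith [hy k (Finset.mem_filter.1 hk).2]
    _ ≤ ∑ k ∈ B, Real.exp (l * y) * ∏ j, Real.exp (-l * if k j = 0 then (0 : ℝ) else 1) := by
        refine Finset.sum_le_sum_of_subset_of_nonneg (Finset.filter_subset _ _) fun k _ _ => ?_
        positivity
    _ = Real.exp (l * y) * (1 + 2 * N * Real.exp (-l)) ^ d := by
        have h := Finset.prod_univ_sum (fun _ : Fin d => Finset.Icc (-(N : ℤ)) N)
          (fun _ i => Real.exp (-l * if i = 0 then (0 : ℝ) else 1))
        rw [← Finset.mul_sum, hB, ← h, hone]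
        simp

/-- A smaller power is absorbed by a larger one up to a constant: above the threshold
`w₀ = (C / η)^{1/(β - α)}` the larger power wins, below it the left side is bounded. -/
lemma rpow_le_rpow_add (α β C η : ℝ) (hα : 0 ≤ α) (h : α < β) (hC : 0 < C) (hη : 0 < η) :
    ∃ K : ℝ, 0 < K ∧ ∀ w : ℝ, 1 ≤ w → C * w ^ α ≤ η * w ^ β + K := by
  set w₀ : ℝ := (C / η) ^ (β - α)⁻¹
  have hw₀ : 0 < w₀ := by positivity
  refine ⟨C * w₀ ^ α, by positivity, fun w hw => ?_⟩
  have hw0 : 0 < w := by linarith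
  rcases le_total w w₀ with h1 | h1
  · have : w ^ α ≤ w₀ ^ α := Real.rpow_le_rpow hw0.le h1 hα
    have h2 : 0 < η * w ^ β := by positivity
    nlinarith
  · have h2 : C / η ≤ w ^ (β - α) := by
      have := Real.rpow_le_rpow hw₀.le h1 (sub_pos.2 h).le
      rwa [← Real.rpow_mul (by positivity), inv_mul_cancel₀ (sub_pos.2 h).ne', Real.rpow_one] at this
    have h3 : w ^ β = w ^ (β - α) * w ^ α := by
      rw [← Real.rpow_add hw0]; congr 1; ring
    have h4 : C ≤ w ^ (β - α) * η := (div_le_iff₀ hη).1 h2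
    have h5 : 0 < w ^ α := by positivity
    have h6 : 0 < C * w₀ ^ α := by positivity
    rw [h3]
    nlinarith [mul_le_mul_of_nonneg_right h4 h5.le]

/-- Young-type inequality: since a logarithm is smaller than any power, `u (1 + log v)` is dominated
by `u ^ p + v ^ q` for any `p > 1`, `q > 0`, with an arbitrarily small factor. -/
lemma mul_one_add_log_le (p q C η : ℝ) (hp : 1 < p) (hq : 0 < q) (hC : 0 < C) (hη : 0 < η) :
    ∃ K : ℝ, 0 < K ∧ ∀ u v : ℝ, 1 ≤ u → 1 ≤ v →
      C * (u * (1 + Real.log v)) ≤ η * (u ^ p + v ^ q) + K := by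
  have hp' : 0 < p - 1 := by linarith
  -- chosen so that `2 * r / (p - 1) + r = q / 2`
  set r : ℝ := q / 2 / (2 / (p - 1) + 1) with hr
  have hr0 : 0 < r := by positivity
  have hrq : 2 / (p - 1) * r + r = q / 2 := by rw [hr]; field_simp
  set D : ℝ := C * (1 + 1 / r) with hD
  have hD0 : 0 < D := by positivity
  obtain ⟨K₁, hK₁, h₁⟩ := rpow_le_rpow_add ((p + 1) / 2) p D η (by linarith) (by linarith) hD0 hη
  obtain ⟨K₂, hK₂, h₂⟩ := rpow_le_rpow_add (q / 2) q D η (by linarith) (by linarith) hD0 hη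
  refine ⟨K₁ + K₂, by positivity, fun u v hu hv => ?_⟩
  have hu0 : 0 < u := by linarith
  have hv0 : 0 < v := by linarith
  have hup : 0 < η * u ^ p := by positivity
  have hvq : 0 < η * v ^ q := by positivity
  have hlog : 1 + Real.log v ≤ (1 + 1 / r) * v ^ r := by
    have e1 := Real.log_le_rpow_div hv0.le hr0
    have e2 := Real.one_le_rpow hv hr0.le
    have e3 : (1 + 1 / r) * v ^ r = v ^ r + v ^ r / r := by ring
    linarith
  have hmain : C * (u * (1 + Real.log v)) ≤ D * (u * v ^ r) := by
    have := mul_le_mul_of_nonneg_left hlog (mul_pos hC hu0).le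
    rw [hD]
    nlinarith
  rcases le_total (v ^ r) (u ^ ((p - 1) / 2)) with h | h
  · have : u * v ^ r ≤ u ^ ((p + 1) / 2) := by
      have e : u ^ ((p + 1) / 2) = u * u ^ ((p - 1) / 2) := by
        nth_rw 2 [← Real.rpow_one u]
        rw [← Real.rpow_add hu0]; congr 1; ring
      rw [e]
      exact mul_le_mul_of_nonneg_left h hu0.le
    have := mul_le_mul_of_nonneg_left this hD0.le
    linarith [h₁ u hu]
  · have h3 : u ≤ v ^ (2 / (p - 1) * r) := by
      have := Real.rpow_le_rpow (by positivity) h (by positivity : (0 : ℝ) ≤ 2 / (p - 1))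
      rw [← Real.rpow_mul hu0.le, ← Real.rpow_mul hv0.le] at this
      have e : (p - 1) / 2 * (2 / (p - 1)) = 1 := by field_simp
      rwa [e, Real.rpow_one, mul_comm r] at this
    have : u * v ^ r ≤ v ^ (q / 2) := by
      rw [← hrq, Real.rpow_add hv0]
      exact mul_le_mul_of_nonneg_right h3 (by positivity)
    have := mul_le_mul_of_nonneg_left this hD0.le
    linarith [h₂ v hv]

/-- The two elementary bounds on `log n`, with a constant depending only on `a` and `b`:
the first comes from the box containing the counted set, the second also uses that a counted point
has at most `ε⁻² / a 0` nonzero coordinates. -/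
lemma log_ncard_le (a b : ℕ → ℝ) (ha : ∀ j, 0 < a j) (hb : ∀ j, 0 < b j)
    (hamono : Monotone a) (hbinf : 0 < ⨅ j, b j) :
    ∃ C : ℝ, 0 < C ∧ ∀ d : ℕ, 0 < d → ∀ X : ℝ, 1 ≤ X →
      Real.log (({k : Fin d → ℤ |
            ∑ j : Fin d, a j * |(k j : ℝ)| ^ (2 * b j) < X ^ 2 - 1}).ncard)
          ≤ C * (d * (1 + Real.log X)) ∧
      Real.log (({k : Fin d → ℤ |
            ∑ j : Fin d, a j * |(k j : ℝ)| ^ (2 * b j) < X ^ 2 - 1}).ncard)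
          ≤ C * (X ^ 2 * (1 + Real.log X)) + C * (X ^ 2 * (1 + Real.log d)) := by
  set β : ℝ := ⨅ j, b j with hβ
  have hβb : ∀ j, β ≤ b j := fun j => ciInf_le ⟨0, by rintro _ ⟨i, rfl⟩; exact (hb i).le⟩ j
  set A : ℝ := a 0 with hA
  have hA0 : 0 < A := ha 0
  set C₀ : ℝ := 2 * (A⁻¹) ^ (2 * β)⁻¹ + 3 with hC₀
  have hC₀0 : 0 < C₀ := by positivity
  set C₁ : ℝ := C₀ + β⁻¹ with hC₁
  have hC₁0 : 0 < C₁ := by positivity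
  refine ⟨C₁ + A⁻¹ * (C₁ + 1) + 1, by positivity, fun d hd X hX => ?_⟩
  have hX0 : 0 < X := by linarith
  have hd1 : (1 : ℝ) ≤ d := by exact_mod_cast hd
  set S : Set (Fin d → ℤ) := {k : Fin d → ℤ |
            ∑ j : Fin d, a j * |(k j : ℝ)| ^ (2 * b j) < X ^ 2 - 1} with hS
  set y : ℝ := A⁻¹ * X ^ 2 with hy
  have hy0 : 0 < y := by positivity
  set Z : ℝ := y ^ (2 * β)⁻¹ with hZ
  have hZ0 : 0 < Z := by positivity
  set N : ℕ := ⌈Z⌉₊ with hN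
  have hN1 : 1 ≤ N := Nat.ceil_pos.2 hZ0
  have hN1' : (1 : ℝ) ≤ N := by exact_mod_cast hN1
  have hsum : ∀ k ∈ S, ∑ j : Fin d, |(k j : ℝ)| ^ (2 * b j) ≤ y := by
    intro k hk
    have h1 : A * ∑ j : Fin d, |(k j : ℝ)| ^ (2 * b j) ≤ X ^ 2 := by
      rw [Finset.mul_sum]
      have : ∑ j : Fin d, A * |(k j : ℝ)| ^ (2 * b j) ≤
          ∑ j : Fin d, a j * |(k j : ℝ)| ^ (2 * b j) :=
        Finset.sum_le_sum fun j _ =>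
          mul_le_mul_of_nonneg_right (hamono (Nat.zero_le _)) (by positivity)
      have hk' : ∑ j : Fin d, a j * |(k j : ℝ)| ^ (2 * b j) < X ^ 2 - 1 := hk
      linarith
    rw [hy, inv_mul_eq_div, le_div_iff₀ hA0]
    linarith
  have habs : ∀ i : ℤ, i ≠ 0 → (1 : ℝ) ≤ |(i : ℝ)| := by
    intro i hi
    exact_mod_cast Int.one_le_abs hi
  have hbox : ∀ k ∈ S, ∀ j, |k j| ≤ (N : ℤ) := by
    intro k hk j
    rcases eq_or_ne (k j) 0 with h0 | h0
    · simp [h0]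
    have h1 := habs _ h0
    have h2 : |(k j : ℝ)| ^ (2 * β) ≤ y :=
      calc |(k j : ℝ)| ^ (2 * β) ≤ |(k j : ℝ)| ^ (2 * b j) :=
            Real.rpow_le_rpow_of_exponent_le h1 (by linarith [hβb j])
        _ ≤ ∑ j : Fin d, |(k j : ℝ)| ^ (2 * b j) :=
            Finset.single_le_sum (f := fun j : Fin d => |(k j : ℝ)| ^ (2 * b j))
              (fun _ _ => by positivity) (Finset.mem_univ j)
        _ ≤ y := hsum k hk
    have h3 : |(k j : ℝ)| ≤ Z := by
      have := Real.rpow_le_rpow (by positivity) h2 (by positivity : 0 ≤ (2 * β)⁻¹)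
      rwa [← Real.rpow_mul (abs_nonneg _), mul_inv_cancel₀ (by positivity), Real.rpow_one] at this
    have h4 : |(k j : ℝ)| ≤ N := h3.trans (Nat.le_ceil Z)
    exact_mod_cast h4
  have hnz : ∀ k ∈ S, (∑ j, if k j = 0 then (0 : ℝ) else 1) ≤ y := by
    intro k hk
    refine le_trans (Finset.sum_le_sum fun j _ => ?_) (hsum k hk)
    split_ifs with h0
    · positivity
    · exact Real.one_le_rpow (habs _ h0) (by linarith [hb j])
  have hlX : 0 ≤ Real.log X := Real.log_nonneg hX
  have hld : 0 ≤ Real.log d := Real.log_nonneg hd1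
  have hNlog : Real.log (1 + 2 * N) ≤ C₁ * (1 + Real.log X) := by
    have hZX : Z = (A⁻¹) ^ (2 * β)⁻¹ * X ^ β⁻¹ := by
      rw [hZ, hy, Real.mul_rpow (by positivity) (by positivity), ← Real.rpow_natCast,
        ← Real.rpow_mul hX0.le]
      congr 2
      push_cast
      field_simp
    have hXβ : 1 ≤ X ^ β⁻¹ := Real.one_le_rpow hX (by positivity)
    have h1 : (1 : ℝ) + 2 * N ≤ C₀ * X ^ β⁻¹ := by
      have := (Nat.ceil_lt_add_one hZ0.le).le
      rw [hC₀, add_mul, mul_assoc, ← hZX]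
      linarith
    have h2 := Real.log_le_log (by positivity) h1
    rw [Real.log_mul hC₀0.ne' (by positivity), Real.log_rpow hX0] at h2
    have h3 := Real.log_le_sub_one_of_pos hC₀0
    have h4 : 0 ≤ C₀ * Real.log X := by positivity
    have h5 : 0 < β⁻¹ := by positivity
    rw [hC₁]
    nlinarith
  have hlogX1 : 0 ≤ A⁻¹ * (C₁ + 1) + 1 := by positivity
  rcases Nat.eq_zero_or_pos S.ncard with hn | hn
  · rw [hn]
    simp only [Nat.cast_zero, Real.log_zero]
    constructor <;> positivity
  have hn' : (0 : ℝ) < S.ncard := by exact_mod_cast hn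
  constructor
  · have h := Real.log_le_log hn' (ncard_le_exp_mul_pow d N S y 0 le_rfl hbox hnz)
    simp only [zero_mul, Real.exp_zero, neg_zero, mul_one, one_mul, Real.log_pow] at h
    have h1 := mul_le_mul_of_nonneg_left hNlog (by linarith : (0 : ℝ) ≤ d)
    have h2 : 0 ≤ (A⁻¹ * (C₁ + 1) + 1) * (d * (1 + Real.log X)) := by positivity
    nlinarith
  · have hNd : (1 : ℝ) ≤ 2 * N * d := by nlinarith
    -- `l = log (2 N d)` makes the `d`-th power `(1 + 1 / d) ^ d`
    have h := Real.log_le_log hn'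
      (ncard_le_exp_mul_pow d N S y (Real.log (2 * N * d)) (Real.log_nonneg hNd) hbox hnz)
    have e1 : 2 * (N : ℝ) * Real.exp (-Real.log (2 * N * d)) = 1 / d := by
      rw [Real.exp_neg, Real.exp_log (by linarith)]
      field_simp
    rw [e1, Real.log_mul (Real.exp_pos _).ne' (by positivity), Real.log_exp, Real.log_pow] at h
    have h1 : (d : ℝ) * Real.log (1 + 1 / d) ≤ 1 := by
      have h2 := Real.log_le_sub_one_of_pos (by positivity : (0 : ℝ) < 1 + 1 / d)
      have h3 := mul_le_mul_of_nonneg_left h2 (by linarith : (0 : ℝ) ≤ d)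
      have h4 : (d : ℝ) * (1 + 1 / d - 1) = 1 := by field_simp; ring
      linarith
    have h2 : Real.log (2 * N * d) ≤ C₁ * (1 + Real.log X) + Real.log d := by
      rw [Real.log_mul (by positivity) (by positivity)]
      have := Real.log_le_log (by positivity : (0 : ℝ) < 2 * N) (by linarith : 2 * (N : ℝ) ≤ 1 + 2 * N)
      linarith
    have h3 := mul_le_mul_of_nonneg_right h2 hy0.le
    have hX2 : 1 ≤ X ^ 2 := one_le_pow₀ hX
    have g1 : 0 ≤ (C₁ + A⁻¹ + 1) * (X ^ 2 * (1 + Real.log X)) := by positivity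
    have g2 : 0 ≤ (C₁ + A⁻¹ * C₁) * (X ^ 2 * (1 + Real.log d)) := by positivity
    have g3 : 0 ≤ A⁻¹ * X ^ 2 := by positivity
    have g4 : 0 ≤ X ^ 2 * Real.log d := by positivity
    rw [hy] at h h3
    nlinarith

/-- For `u, v ≥ 0`, the quantity `u ^ s + v ^ t` tends to infinity with `u + v`. -/
lemma exists_le_rpow_add_rpow (s t L : ℝ) (hs : 0 < s) (ht : 0 < t) (hL : 0 < L) :
    ∃ M : ℝ, 0 < M ∧ ∀ u v : ℝ, 0 ≤ u → 0 ≤ v → M ≤ u + v → L ≤ u ^ s + v ^ t := by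
  have key : ∀ r : ℝ, 0 < r → ∀ w : ℝ, L ^ r⁻¹ ≤ w → L ≤ w ^ r := by
    intro r hr w hw
    have := Real.rpow_le_rpow (by positivity) hw hr.le
    rwa [← Real.rpow_mul hL.le, inv_mul_cancel₀ hr.ne', Real.rpow_one] at this
  refine ⟨L ^ s⁻¹ + L ^ t⁻¹, by positivity, fun u v hu hv h => ?_⟩
  have h1 : 0 ≤ u ^ s := by positivity
  have h2 : 0 ≤ v ^ t := by positivity
  rcases le_total (L ^ s⁻¹) u with h3 | h3
  · linarith [key s hs u h3]
  · linarith [key t ht v (by linarith)]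

/-- For the weighted anisotropic Sobolev embeddings with information complexity
`n(ε, I_d) = #{k ∈ ℤ^d : ∑_{j=1}^d a_j |k_j|^{2b_j} < ε^{-2} - 1}`:
`(s,t)`-weak tractability always holds whenever `max(s/2, t) > 1`. -/
theorem st_WT_always_holds
    (a b : ℕ → ℝ) (ha : ∀ j, 0 < a j) (hb : ∀ j, 0 < b j)
    (hamono : Monotone a) (hbinf : 0 < ⨅ j, b j)
    (s t : ℝ) (hs : 0 < s) (ht : 0 < t) (hst : 1 < max (s / 2) t) :
    ∀ δ : ℝ, 0 < δ → ∃ M : ℝ, 0 < M ∧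
      ∀ d : ℕ, 0 < d → ∀ ε : ℝ, ε ∈ Set.Ioo (0 : ℝ) 1 → M ≤ ε⁻¹ + d →
        |Real.log (({k : Fin d → ℤ |
            ∑ j : Fin d, a j * |(k j : ℝ)| ^ (2 * b j) < ε⁻¹ ^ 2 - 1}).ncard) /
          (ε⁻¹ ^ s + (d : ℝ) ^ t)| ≤ δ := by
  intro δ hδ
  obtain ⟨C, hC, hCb⟩ := log_ncard_le a b ha hb hamono hbinf
  have hK : ∃ K : ℝ, 0 < K ∧ ∀ d : ℕ, 0 < d → ∀ X : ℝ, 1 ≤ X →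
      Real.log (({k : Fin d → ℤ |
        ∑ j : Fin d, a j * |(k j : ℝ)| ^ (2 * b j) < X ^ 2 - 1}).ncard)
          ≤ δ / 2 * (X ^ s + (d : ℝ) ^ t) + K := by
    rcases lt_max_iff.1 hst with h | h
    · obtain ⟨K₁, hK₁, h₁⟩ := mul_one_add_log_le (s / 2) s C (δ / 8) h hs hC (by positivity)
      obtain ⟨K₂, hK₂, h₂⟩ := mul_one_add_log_le (s / 2) t C (δ / 8) h ht hC (by positivity)
      refine ⟨K₁ + K₂, by positivity, fun d hd X hX => ?_⟩
      have hX0 : 0 < X := by linarith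
      have hd1 : (1 : ℝ) ≤ d := by exact_mod_cast hd
      have e : (X ^ 2) ^ (s / 2) = X ^ s := by
        rw [← Real.rpow_natCast, ← Real.rpow_mul hX0.le]
        congr 1
        push_cast
        ring
      have b1 := h₁ (X ^ 2) X (one_le_pow₀ hX) hX
      have b2 := h₂ (X ^ 2) d (one_le_pow₀ hX) hd1
      rw [e] at b1 b2
      have p1 : 0 ≤ δ * X ^ s := by positivity
      have p2 : 0 ≤ δ * (d : ℝ) ^ t := by positivity
      have := (hCb d hd X hX).2
      linarith
    · obtain ⟨K, hK, h₁⟩ := mul_one_add_log_le t s C (δ / 2) h hs hC (by positivity)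
      refine ⟨K, hK, fun d hd X hX => ?_⟩
      have b1 := h₁ d X (by exact_mod_cast hd) hX
      have := (hCb d hd X hX).1
      linarith
  obtain ⟨K, hK0, hKb⟩ := hK
  obtain ⟨M, hM, hMb⟩ := exists_le_rpow_add_rpow s t (2 * K / δ) hs ht (by positivity)
  refine ⟨M, hM, fun d hd ε hε hMε => ?_⟩
  have hX : 1 ≤ ε⁻¹ := (one_le_inv₀ hε.1).2 hε.2.le
  have hX0 : 0 < ε⁻¹ := by linarith
  have hden : 0 < ε⁻¹ ^ s + (d : ℝ) ^ t := by positivity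
  have h1 := hMb ε⁻¹ d hX0.le (by positivity) hMε
  rw [div_le_iff₀ hδ] at h1
  rw [abs_of_nonneg (div_nonneg (Real.log_natCast_nonneg _) hden.le), div_le_iff₀ hden]
  linarith [hKb d hd ε⁻¹ hX]
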